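/- Let E be a compact subgroup of the unitary group U_n of M_n(ℂ), equipped with its Haar probability measure, let p ≥ 1, and let N = n². For a unitary U ∈ E and (i,a),(j,b) ∈ H×Ĥ, let P_{(ia),(jb)}(U) denote the orthogonal projection of the Hilbert space M_n(ℂ) onto the line ℂ·W_{ia}U(W_{jb})*. Then for all multi-indices i = (i₁,…,i_p), j = (j₁,…,j_p) ∈ H^p and a = (a₁,…,a_p), b = (b₁,…,b_p) ∈ Ĥ^p, the quantity (T_p)_{ia,jb} := (1/N) ∫_E Tr( P_{(i₁a₁),(j₁b₁)}(U) ∘ ⋯ ∘ P_{(i_pa_p),(j_pb_p)}(U) ) dU (with Tr the unnormalized trace of endomorphisms of M_n(ℂ)) is given by the formula (T_p)_{ia,jb} = (1/N) · ∏_{k=1}^{p} ⟨i_k, a_k − a_{k+1}⟩ · ∏_{k=1}^{p} ⟨j_{k+1}, b_{k+1} − b_k⟩ · ∫_E ∏_{k=1}^{p} tr( W_{i_{k+1}−i_k, a_{k+1}−a_k} · U · W_{j_k−j_{k+1}, b_k−b_{k+1}} · U* ) dU, where all subscripts k are taken cyclically modulo p (so index p+1 means 1). -/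

import Mathlib

/-!
The trace of a composition of rank-one maps `A ↦ ⟨x_k, A⟩ • x_k` telescopes: the composition is
again of rank one, and its trace is the cyclic product `∏ ⟨x_k, x_{k+1}⟩`
(`trace_prod_lineProj`). For `x_k = W_k U V_k*` each factor is, by cyclicity of the trace,
`tr(W_k* W_{k+1} U V_{k+1}* V_k U*)`, and the Weyl relation `weyl_conjTranspose_mul`
collapses each of the two products `W* W'` into a scalar times one Weyl matrix. The integrands on
the two sides therefore agree pointwise in `U` up to the stated constant phase, which comes out of
the integral.
-/

open Matrix MeasureTheory

/-- The Weyl matrix `W_{ia}` associated to a finite abelian group `H`: rows and columns are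
indexed by the Pontryagin dual `Ĥ = AddChar H ℂ` (written additively), and it acts on the
standard basis by `W_{ia} e_b = ⟨i,b⟩ e_{a+b}`, where `⟨i,b⟩ = b i` is the Fourier coupling. -/
noncomputable def Weyl {H : Type*} [AddCommGroup H] [Fintype H] (i : H) (a : AddChar H ℂ) :
    Matrix (AddChar H ℂ) (AddChar H ℂ) ℂ :=
  Matrix.of fun r c => if r = a + c then c i else 0

/-- The normalized trace `tr = (1/n)·Tr` on `M_n(ℂ)`. -/
noncomputable def ntr {H : Type*} [AddCommGroup H] [Fintype H]
    (x : Matrix (AddChar H ℂ) (AddChar H ℂ) ℂ) : ℂ :=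
  (Fintype.card H : ℂ)⁻¹ * x.trace

/-- The inner product `⟨x,·⟩ = tr(x* ·)` on `M_n(ℂ)`, as a linear functional in its second
variable. -/
noncomputable def matInnerL {H : Type*} [AddCommGroup H] [Fintype H]
    (x : Matrix (AddChar H ℂ) (AddChar H ℂ) ℂ) :
    Matrix (AddChar H ℂ) (AddChar H ℂ) ℂ →ₗ[ℂ] ℂ :=
  (Fintype.card H : ℂ)⁻¹ •
    (Matrix.traceLinearMap (AddChar H ℂ) ℂ ℂ ∘ₗ LinearMap.mulLeft ℂ xᴴ)

/-- The orthogonal projection of the Hilbert space `M_n(ℂ)` (inner product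
`⟨x,y⟩ = tr(x* y)`) onto the complex line spanned by a unit vector `x`: `A ↦ ⟨x,A⟩ • x`. -/
noncomputable def lineProj {H : Type*} [AddCommGroup H] [Fintype H]
    (x : Matrix (AddChar H ℂ) (AddChar H ℂ) ℂ) :
    Matrix (AddChar H ℂ) (AddChar H ℂ) ℂ →ₗ[ℂ] Matrix (AddChar H ℂ) (AddChar H ℂ) ℂ :=
  (matInnerL x).smulRight x

/-- The Weyl relation `W_{ia}* W_{i'a'} = ⟨i, a - a'⟩ W_{i'-i, a'-a}`. -/
lemma weyl_conjTranspose_mul {H : Type*} [AddCommGroup H] [Fintype H] (i i' : H)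
    (a a' : AddChar H ℂ) :
    (Weyl i a)ᴴ * Weyl i' a' = ((a - a') i) • Weyl (i' - i) (a' - a) := by
  ext r c
  simp only [Weyl, Matrix.mul_apply, Matrix.conjTranspose_apply, Matrix.of_apply,
    Matrix.smul_apply, smul_eq_mul, mul_ite, mul_zero, Finset.sum_ite_eq',
    Finset.mem_univ, if_true]
  by_cases h : r = a' - a + c
  · have h' : a' + c = a + r := by rw [h]; abel
    have hr : star (r i) = (a - a') i * c (-i) := by
      rw [Complex.star_def, ← AddChar.map_neg_eq_conj, h, AddChar.add_apply,
        AddChar.sub_apply a' a, AddChar.sub_apply a a', neg_neg]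
      ring
    rw [if_pos h', if_pos h, hr, sub_eq_add_neg i' i, AddChar.map_add_eq_mul]
    ring
  · have h' : ¬ a' + c = a + r := fun e => h (by
      rw [eq_comm, ← sub_eq_iff_eq_add'] at e
      rw [← sub_eq_zero, ← sub_eq_zero.mpr e]; abel)
    rw [if_neg h', if_neg h]
    simp

lemma matInnerL_apply {H : Type*} [AddCommGroup H] [Fintype H]
    (x y : Matrix (AddChar H ℂ) (AddChar H ℂ) ℂ) : matInnerL x y = ntr (xᴴ * y) := by
  simp [matInnerL, ntr]

/-- A composition of the maps `lineProj (x k)` again has rank at most one, with range in the line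
of the first vector and depending only on the inner product with the last one. -/
lemma prod_lineProj {H : Type*} [AddCommGroup H] [Fintype H] (q : ℕ)
    (x : Fin (q + 1) → Matrix (AddChar H ℂ) (AddChar H ℂ) ℂ) :
    (List.ofFn fun k => (lineProj (x k) :
      Module.End ℂ (Matrix (AddChar H ℂ) (AddChar H ℂ) ℂ))).prod =
    (matInnerL (x (Fin.last q))).smulRight
      ((∏ k : Fin q, matInnerL (x k.castSucc) (x k.succ)) • x 0) := by
  induction q with
  | zero => simp [lineProj]
  | succ q ih =>
    rw [List.ofFn_succ, List.prod_cons, ih (fun k => x k.succ), Fin.prod_univ_succ]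
    ext1 A
    simp only [Module.End.mul_apply, LinearMap.smulRight_apply, lineProj, map_smul,
      smul_smul, Fin.succ_last, Fin.castSucc_zero, Fin.succ_zero_eq_one, Fin.succ_castSucc]
    congr 1
    ring

/-- For `p = 1` the index `k + 1` is `k`, and the right side is `⟨x_1, x_1⟩`. -/
lemma trace_prod_lineProj {H : Type*} [AddCommGroup H] [Fintype H] (p : ℕ) [NeZero p]
    (x : Fin p → Matrix (AddChar H ℂ) (AddChar H ℂ) ℂ) :
    LinearMap.trace ℂ (Matrix (AddChar H ℂ) (AddChar H ℂ) ℂ)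
      ((List.ofFn fun k => (lineProj (x k) :
        Module.End ℂ (Matrix (AddChar H ℂ) (AddChar H ℂ) ℂ))).prod) =
    ∏ k : Fin p, matInnerL (x k) (x (k + 1)) := by
  obtain ⟨q, rfl⟩ := Nat.exists_eq_succ_of_ne_zero (NeZero.ne p)
  rw [prod_lineProj, LinearMap.trace_smulRight, map_smul, smul_eq_mul, Fin.prod_univ_castSucc]
  simp [Fin.coeSucc_eq_succ]

/-- The factor `⟨x_k, x_{k+1}⟩` for the vectors `W_{ia} U W_{jb}*` of the model. -/
lemma matInnerL_weyl {H : Type*} [AddCommGroup H] [Fintype H] (i i' j j' : H)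
    (a a' b b' : AddChar H ℂ) (U : Matrix (AddChar H ℂ) (AddChar H ℂ) ℂ) :
    matInnerL (Weyl i a * U * (Weyl j b)ᴴ) (Weyl i' a' * U * (Weyl j' b')ᴴ) =
      (a - a') i * (b' - b) j' *
        ntr (Weyl (i' - i) (a' - a) * U * Weyl (j - j') (b - b') * Uᴴ) := by
  have key : ((Weyl i a * U * (Weyl j b)ᴴ)ᴴ * (Weyl i' a' * U * (Weyl j' b')ᴴ)).trace =
      (((Weyl i a)ᴴ * Weyl i' a') * U * ((Weyl j' b')ᴴ * Weyl j b) * Uᴴ).trace := by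
    simp only [Matrix.conjTranspose_mul, Matrix.conjTranspose_conjTranspose]
    rw [Matrix.mul_assoc, Matrix.mul_assoc, Matrix.trace_mul_comm, Matrix.mul_assoc,
      Matrix.trace_mul_comm]
    simp only [Matrix.mul_assoc]
  rw [matInnerL_apply, ntr, ntr, key, weyl_conjTranspose_mul, weyl_conjTranspose_mul]
  simp only [Matrix.smul_mul, Matrix.mul_smul, Matrix.trace_smul, smul_eq_mul]
  ring

/-- Computation of the matrix `T_p` of the Weyl matrix model over a compact subgroup
`E ⊆ U_n`, with its Haar probability measure: for all multi-indices (with subscripts read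
cyclically modulo `p`),
`(T_p)_{ia,jb} = (1/N) ∫_E Tr(P_{(i₁a₁),(j₁b₁)}(U) ∘ ⋯ ∘ P_{(i_pa_p),(j_pb_p)}(U)) dU`
equals
`(1/N) · ∏_k ⟨i_k, a_k - a_{k+1}⟩ · ∏_k ⟨j_{k+1}, b_{k+1} - b_k⟩ ·
   ∫_E ∏_k tr(W_{i_{k+1}-i_k, a_{k+1}-a_k} U W_{j_k-j_{k+1}, b_k-b_{k+1}} U*) dU`,
where `N = n²` and `P_{(ia),(jb)}(U)` is the orthogonal projection onto
`ℂ·W_{ia} U (W_{jb})*`. -/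
theorem weyl_model_Tp_formula {H : Type*} [AddCommGroup H] [Fintype H]
    (E : Subgroup (Matrix.unitaryGroup (AddChar H ℂ) ℂ)) [CompactSpace E]
    [MeasurableSpace E] [BorelSpace E]
    (μ : Measure E) [μ.IsHaarMeasure] [IsProbabilityMeasure μ]
    (p : ℕ) [NeZero p] (i j : Fin p → H) (a b : Fin p → AddChar H ℂ) :
    ((Fintype.card H : ℂ) ^ 2)⁻¹ *
      ∫ U : E, LinearMap.trace ℂ (Matrix (AddChar H ℂ) (AddChar H ℂ) ℂ)
        ((List.ofFn fun k : Fin p =>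
          (lineProj (Weyl (i k) (a k) * U.1.1 * (Weyl (j k) (b k))ᴴ) :
            Module.End ℂ (Matrix (AddChar H ℂ) (AddChar H ℂ) ℂ))).prod) ∂μ =
    ((Fintype.card H : ℂ) ^ 2)⁻¹ *
      (∏ k : Fin p, (a k - a (k + 1)) (i k)) *
      (∏ k : Fin p, (b (k + 1) - b k) (j (k + 1))) *
      ∫ U : E, ∏ k : Fin p,
        ntr (Weyl (i (k + 1) - i k) (a (k + 1) - a k) * U.1.1 *
          Weyl (j k - j (k + 1)) (b k - b (k + 1)) * (U.1.1)ᴴ) ∂μ := by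
  simp only [trace_prod_lineProj, matInnerL_weyl, Finset.prod_mul_distrib]
  rw [integral_const_mul]
  ring
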